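/- Let κ > 0, δ > 0, and let p ≥ 1 be an integer. For i = 1,…,p, let s_i ∈ ℝ^n with s_i ≠ 0, y_i ∈ ℝ^n with ‖y_i‖ ≤ κ‖s_i‖, and γ_i ∈ [δ, κ+δ]; define θ_i = 0.75·γ_i·(s_iᵀs_i)/(γ_i·s_iᵀs_i − s_iᵀy_i) if s_iᵀy_i < 0.25·γ_i·s_iᵀs_i and θ_i = 1 otherwise, and ȳ_i = θ_i·y_i + (1−θ_i)·γ_i·s_i. Let γ₀ ∈ [δ, κ+δ], set H₀ = γ₀^{−1}·I, and for i = 1,…,p set ρ_i = 1/(s_iᵀȳ_i) and H_i = (I − ρ_i·s_iȳ_iᵀ)·H_{i−1}·(I − ρ_i·ȳ_is_iᵀ) + ρ_i·s_is_iᵀ. Then, with α = (4κ+5δ)/δ, the largest eigenvalue of H_p satisfies λ_max(H_p) = ‖H_p‖ ≤ ((α^{2p} − 1)/(α² − 1))·(4/δ) + α^{2p}/δ. -/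

import Mathlib

open Matrix

/-- The operator (spectral) norm of a real matrix, induced by the Euclidean norm. -/
noncomputable def l2OpNorm {n : ℕ} (A : Matrix (Fin n) (Fin n) ℝ) : ℝ :=
  ‖Matrix.toEuclideanCLM (𝕜 := ℝ) A‖

section Aux
open scoped Matrix.Norms.L2Operator

lemma aux_dot {n : ℕ} (u v : Fin n → ℝ) :
    u ⬝ᵥ v = inner ℝ (WithLp.toLp 2 u) (WithLp.toLp 2 v) := by
  simp [PiLp.inner_apply, dotProduct, mul_comm]

lemma aux_sqrt {n : ℕ} (u : Fin n → ℝ) :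
    Real.sqrt (u ⬝ᵥ u) = ‖WithLp.toLp 2 u‖ := by
  rw [aux_dot, real_inner_self_eq_norm_sq, Real.sqrt_sq (norm_nonneg _)]

lemma aux_vecMulVec {n : ℕ} (u v : Fin n → ℝ) :
    ‖Matrix.vecMulVec u v‖ ≤ ‖WithLp.toLp 2 u‖ * ‖WithLp.toLp 2 v‖ := by
  rw [← Matrix.l2_opNorm_toEuclideanCLM]
  refine ContinuousLinearMap.opNorm_le_bound _ (by positivity) fun x => ?_
  have h : Matrix.toEuclideanCLM (𝕜 := ℝ) (Matrix.vecMulVec u v) x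
      = (v ⬝ᵥ x.ofLp) • WithLp.toLp 2 u := by
    ext i
    simp [Matrix.vecMulVec_mulVec, mul_comm]
  rw [h, norm_smul, aux_dot]
  have := norm_inner_le_norm (𝕜 := ℝ) (WithLp.toLp 2 v) (WithLp.toLp 2 x.ofLp)
  calc _ ≤ (‖WithLp.toLp 2 v‖ * ‖WithLp.toLp 2 x.ofLp‖) * ‖WithLp.toLp 2 u‖ := by gcongr
    _ = _ := by ring

lemma aux_step {n : ℕ} (hn : 1 ≤ n) (κ δ γ θ ρ : ℝ) (hκ : 0 < κ) (hδ : 0 < δ)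
    (s y ybar : Fin n → ℝ) (H : Matrix (Fin n) (Fin n) ℝ)
    (hs : s ≠ 0) (hy : Real.sqrt (y ⬝ᵥ y) ≤ κ * Real.sqrt (s ⬝ᵥ s))
    (hγ : γ ∈ Set.Icc δ (κ + δ))
    (hθ : θ = if s ⬝ᵥ y < 0.25 * γ * (s ⬝ᵥ s)
      then 0.75 * γ * (s ⬝ᵥ s) / (γ * (s ⬝ᵥ s) - s ⬝ᵥ y) else 1)
    (hybar : ybar = θ • y + (1 - θ) • γ • s)
    (hρ : ρ = (s ⬝ᵥ ybar)⁻¹) :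
    ‖(1 - ρ • Matrix.vecMulVec s ybar) * H * (1 - ρ • Matrix.vecMulVec ybar s)
      + ρ • Matrix.vecMulVec s s‖ ≤ ((4 * κ + 5 * δ) / δ) ^ 2 * ‖H‖ + 4 / δ := by
  obtain ⟨hγ1, hγ2⟩ := hγ
  have hγ0 : 0 < γ := by linarith
  rw [aux_sqrt, aux_sqrt] at hy
  have hS0 : 0 < ‖WithLp.toLp 2 s‖ := by
    rw [norm_pos_iff]
    intro h
    exact hs (by simpa using h)
  have hss : s ⬝ᵥ s = ‖WithLp.toLp 2 s‖ ^ 2 := by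
    rw [aux_dot, real_inner_self_eq_norm_sq]
  have hsy : s ⬝ᵥ ybar = θ * (s ⬝ᵥ y) + (1 - θ) * (γ * (s ⬝ᵥ s)) := by
    rw [hybar]
    simp [dotProduct_add, dotProduct_smul]
  have hyb : ‖WithLp.toLp 2 ybar‖ ≤ |θ| * ‖WithLp.toLp 2 y‖
      + |1 - θ| * (γ * ‖WithLp.toLp 2 s‖) := by
    rw [hybar, WithLp.toLp_add, WithLp.toLp_smul, WithLp.toLp_smul, WithLp.toLp_smul]
    refine (norm_add_le _ _).trans (le_of_eq ?_)
    rw [norm_smul, norm_smul, norm_smul, Real.norm_eq_abs, Real.norm_eq_abs, Real.norm_eq_abs,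
      abs_of_pos hγ0]
  have hYs := aux_vecMulVec s ybar
  have hYs2 := aux_vecMulVec ybar s
  have hSS := aux_vecMulVec s s
  set S := ‖WithLp.toLp 2 s‖
  set Y := ‖WithLp.toLp 2 ybar‖
  set q := s ⬝ᵥ y
  rw [hss] at hsy hθ
  have hS2 : 0 < γ * S ^ 2 := by positivity
  have key : 0 ≤ θ ∧ θ ≤ 1 ∧ 0.25 * γ * S ^ 2 ≤ s ⬝ᵥ ybar := by
    split_ifs at hθ with hc
    · have hd : 0 < γ * S ^ 2 - q := by norm_num at hc; linarith
      refine ⟨?_, ?_, ?_⟩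
      · rw [hθ]; positivity
      · rw [hθ, div_le_one hd]; norm_num at hc ⊢; linarith
      · have : θ * (γ * S ^ 2 - q) = 0.75 * γ * S ^ 2 := by
          rw [hθ]; field_simp
        rw [hsy]; norm_num at this ⊢; linarith
    · rw [hsy, hθ]; norm_num at hc ⊢; linarith
  obtain ⟨h0, h1, h2⟩ := key
  rw [abs_of_nonneg h0, abs_of_nonneg (sub_nonneg.2 h1)] at hyb
  have hY : Y ≤ (κ + δ) * S := by
    have e1 : θ * ‖WithLp.toLp 2 y‖ ≤ θ * ((κ + δ) * S) := by
      gcongr; nlinarith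
    have e2 : (1 - θ) * (γ * S) ≤ (1 - θ) * ((κ + δ) * S) :=
      mul_le_mul_of_nonneg_left (by gcongr) (sub_nonneg.2 h1)
    linarith
  have hb : δ / 4 * S ^ 2 ≤ s ⬝ᵥ ybar := by
    have : δ * S ^ 2 ≤ γ * S ^ 2 := by gcongr
    norm_num at h2; linarith
  have hρ0 : 0 ≤ ρ := by
    rw [hρ]; exact inv_nonneg.2 (le_trans (by positivity) hb)
  have hρS : ρ * (S * S) ≤ 4 / δ := by
    have : ρ ≤ (δ / 4 * S ^ 2)⁻¹ := by
      rw [hρ]; exact inv_anti₀ (by positivity) hb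
    calc ρ * (S * S) ≤ (δ / 4 * S ^ 2)⁻¹ * (S * S) := by gcongr
      _ = 4 / δ := by field_simp
  have hρY : ρ * (S * Y) ≤ (4 * κ + 4 * δ) / δ := by
    calc ρ * (S * Y) ≤ ρ * (S * ((κ + δ) * S)) := by gcongr
      _ = (κ + δ) * (ρ * (S * S)) := by ring
      _ ≤ (κ + δ) * (4 / δ) := by gcongr
      _ = _ := by ring
  have hone : ‖(1 : Matrix (Fin n) (Fin n) ℝ)‖ ≤ 1 := by
    rw [← Matrix.l2_opNorm_toEuclideanCLM, map_one]
    exact ContinuousLinearMap.norm_id_le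
  have hα : (4 * κ + 5 * δ) / δ = 1 + (4 * κ + 4 * δ) / δ := by field_simp; ring
  have fac : ∀ M : Matrix (Fin n) (Fin n) ℝ, ‖M‖ ≤ S * Y →
      ‖1 - ρ • M‖ ≤ (4 * κ + 5 * δ) / δ := by
    intro M hM
    refine (norm_sub_le _ _).trans ?_
    rw [norm_smul, Real.norm_eq_abs, abs_of_nonneg hρ0, hα]
    have : ρ * ‖M‖ ≤ ρ * (S * Y) := by gcongr
    linarith
  have f1 := fac _ hYs
  have f2 := fac _ (hYs2.trans_eq (mul_comm _ _))
  refine (norm_add_le _ _).trans (add_le_add ?_ ?_)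
  · refine (norm_mul_le _ _).trans ?_
    have hα0 : 0 ≤ (4 * κ + 5 * δ) / δ := by positivity
    calc _ ≤ (‖1 - ρ • Matrix.vecMulVec s ybar‖ * ‖H‖) * ‖1 - ρ • Matrix.vecMulVec ybar s‖ := by
          gcongr; exact norm_mul_le _ _
      _ ≤ ((4 * κ + 5 * δ) / δ * ‖H‖) * ((4 * κ + 5 * δ) / δ) := by gcongr
      _ = _ := by ring
  · rw [norm_smul, Real.norm_eq_abs, abs_of_nonneg hρ0]
    refine le_trans ?_ hρS
    gcongr

lemma aux_spec {n : ℕ} (A : Matrix (Fin n) (Fin n) ℝ) (t : ℝ) (ht : t ∈ spectrum ℝ A) :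
    t ≤ l2OpNorm A := by
  have h : t ∈ spectrum ℝ (Matrix.toEuclideanCLM (𝕜 := ℝ) A) := by
    rwa [AlgEquiv.spectrum_eq]
  refine (le_abs_self t).trans ((spectrum.norm_le_norm_mul_of_mem h).trans ?_)
  calc _ ≤ ‖Matrix.toEuclideanCLM (𝕜 := ℝ) A‖ * 1 := by
        gcongr; exact ContinuousLinearMap.norm_id_le
    _ = _ := by rw [mul_one]; rfl

end Aux

theorem sdlbfgs_H_max_eigenvalue_bound
    {n : ℕ} (hn : 1 ≤ n)
    (κ δ : ℝ) (hκ : 0 < κ) (hδ : 0 < δ)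
    (p : ℕ) (hp : 1 ≤ p)
    (s y ybar : ℕ → Fin n → ℝ) (γ θ ρ : ℕ → ℝ) (γ0 : ℝ)
    (H : ℕ → Matrix (Fin n) (Fin n) ℝ)
    (hs : ∀ i, 1 ≤ i → i ≤ p → s i ≠ 0)
    (hy : ∀ i, 1 ≤ i → i ≤ p →
      Real.sqrt (y i ⬝ᵥ y i) ≤ κ * Real.sqrt (s i ⬝ᵥ s i))
    (hγ : ∀ i, 1 ≤ i → i ≤ p → γ i ∈ Set.Icc δ (κ + δ))
    (hθ : ∀ i, 1 ≤ i → i ≤ p → θ i =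
      if s i ⬝ᵥ y i < 0.25 * γ i * (s i ⬝ᵥ s i)
      then 0.75 * γ i * (s i ⬝ᵥ s i) / (γ i * (s i ⬝ᵥ s i) - s i ⬝ᵥ y i) else 1)
    (hybar : ∀ i, 1 ≤ i → i ≤ p →
      ybar i = θ i • y i + (1 - θ i) • γ i • s i)
    (hγ0 : γ0 ∈ Set.Icc δ (κ + δ))
    (hH0 : H 0 = γ0⁻¹ • (1 : Matrix (Fin n) (Fin n) ℝ))
    (hρ : ∀ i, 1 ≤ i → i ≤ p → ρ i = (s i ⬝ᵥ ybar i)⁻¹)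
    (hHrec : ∀ i, 1 ≤ i → i ≤ p → H i =
      (1 - ρ i • Matrix.vecMulVec (s i) (ybar i)) * H (i - 1) *
        (1 - ρ i • Matrix.vecMulVec (ybar i) (s i))
      + ρ i • Matrix.vecMulVec (s i) (s i)) :
    l2OpNorm (H p) ≤
      ((((4 * κ + 5 * δ) / δ) ^ (2 * p) - 1) / (((4 * κ + 5 * δ) / δ) ^ 2 - 1)) * (4 / δ)
        + ((4 * κ + 5 * δ) / δ) ^ (2 * p) / δ ∧
    ∀ t : ℝ, t ∈ spectrum ℝ (H p) →
      t ≤ ((((4 * κ + 5 * δ) / δ) ^ (2 * p) - 1) / (((4 * κ + 5 * δ) / δ) ^ 2 - 1)) * (4 / δ)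
        + ((4 * κ + 5 * δ) / δ) ^ (2 * p) / δ := by
  have main : ∀ i, i ≤ p → l2OpNorm (H i) ≤
      ((((4 * κ + 5 * δ) / δ) ^ (2 * i) - 1) / (((4 * κ + 5 * δ) / δ) ^ 2 - 1)) * (4 / δ)
        + ((4 * κ + 5 * δ) / δ) ^ (2 * i) / δ := by
    have hα : 1 < (4 * κ + 5 * δ) / δ := by
      rw [one_lt_div hδ]; linarith
    have hα2 : ((4 * κ + 5 * δ) / δ) ^ 2 - 1 ≠ 0 := by nlinarith
    intro i
    induction i with
    | zero =>
      intro _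
      rw [hH0, l2OpNorm, map_smul, map_one, norm_smul]
      have h1 : ‖(1 : EuclideanSpace ℝ (Fin n) →L[ℝ] EuclideanSpace ℝ (Fin n))‖ ≤ 1 :=
        ContinuousLinearMap.norm_id_le
      have h0 : 0 < γ0 := lt_of_lt_of_le hδ hγ0.1
      have h2 : ‖γ0⁻¹‖ ≤ δ⁻¹ := by
        rw [Real.norm_eq_abs, abs_of_pos (inv_pos.2 h0)]
        exact inv_anti₀ hδ hγ0.1
      calc _ ≤ δ⁻¹ * 1 := by gcongr
        _ = _ := by simp
    | succ i ih =>
      intro hi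
      have ih := ih (by omega)
      have h1 : 1 ≤ i + 1 := by omega
      have hstep := aux_step hn κ δ (γ (i+1)) (θ (i+1)) (ρ (i+1)) hκ hδ (s (i+1)) (y (i+1))
        (ybar (i+1)) (H i) (hs _ h1 hi) (hy _ h1 hi) (hγ _ h1 hi) (hθ _ h1 hi)
        (hybar _ h1 hi) (hρ _ h1 hi)
      have hr := hHrec (i+1) h1 hi
      rw [Nat.add_sub_cancel] at hr
      rw [← hr] at hstep
      change l2OpNorm (H (i+1)) ≤ _ * l2OpNorm (H i) + _ at hstep
      refine hstep.trans ?_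
      set a := (4 * κ + 5 * δ) / δ
      calc _ ≤ a ^ 2 * ((a ^ (2 * i) - 1) / (a ^ 2 - 1) * (4 / δ) + a ^ (2 * i) / δ) + 4 / δ := by
            gcongr
        _ = _ := by
            have e : a ^ (2 * (i + 1)) = a ^ 2 * a ^ (2 * i) := by ring
            rw [e]
            field_simp
            ring
  exact ⟨main p le_rfl, fun t ht => (aux_spec _ t ht).trans (main p le_rfl)⟩
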